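/- On an almost quaternion-Hermitian 4n-manifold, under a conformal change of metric g° = e^{2σ} g with σ a smooth function, the associated tensors transform as: ω_A° = e^{2σ} ω_A; dω_A° = e^{2σ}(2dσ ∧ ω_A + dω_A); A d*°ω_A° = A d*ω_A − 2(2n−1) dσ; A λ_A° = A λ_A − (1/n) dσ; β_I° = e^{2σ}(β_I + 2 J dσ ∧ ω_J + 2 K dσ ∧ ω_K) (and cyclically); ν^A_3° = ν^A_3 − 4dσ; ν^A_4° = ν^A_4 − 4dσ; θ^{ξ°} = θ^ξ − (1/4) dσ; θ^{ξ°}_A = θ^ξ_A − (1/4) dσ. In particular, the only Sp(n)Sp(1)-component of the intrinsic torsion that changes under the conformal rescaling is ξ_{EH}. -/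

import Mathlib

/-!  Synthetic (Koszul-style) model of an almost quaternion-Hermitian `4n`-manifold.

`C` plays the role of the commutative ℝ-algebra of smooth functions and `V` that of
the `C`-module of vector fields, equipped with a directional derivative `D`, a Lie
bracket, a Riemannian metric `g` together with its Levi-Civita connection `nab`
(characterised by being torsion-free and metric), a local adapted basis `I, J, K`
of anticommuting almost complex structures with `K = I J`, each compatible with the
metric, and a (local) orthonormal frame.  -/

noncomputable section

open scoped BigOperators

structure AQH (n : ℕ) (C : Type*) (V : Type*) [CommRing C] [Algebra ℝ C]
    [AddCommGroup V] [Module C V] where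
  /-- derivative of a function along a vector field -/
  D : V → C → C
  D_add : ∀ X f g, D X (f + g) = D X f + D X g
  D_mul : ∀ X f g, D X (f * g) = f * D X g + g * D X f
  D_const : ∀ X (r : ℝ), D X (algebraMap ℝ C r) = 0
  D_addX : ∀ X Y f, D (X + Y) f = D X f + D Y f
  D_smulX : ∀ (f : C) (X : V) (h : C), D (f • X) h = f * D X h
  /-- the Lie bracket of vector fields -/
  bracket : V → V → V
  bracket_skew : ∀ X Y, bracket X Y = -bracket Y X
  bracket_add : ∀ X Y Z, bracket X (Y + Z) = bracket X Y + bracket X Z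
  bracket_smul : ∀ X (f : C) Y, bracket X (f • Y) = f • bracket X Y + (D X f) • Y
  bracket_jacobi : ∀ X Y Z,
    bracket X (bracket Y Z) + bracket Y (bracket Z X) + bracket Z (bracket X Y) = 0
  D_bracket : ∀ X Y f, D (bracket X Y) f = D X (D Y f) - D Y (D X f)
  /-- the Riemannian metric -/
  g : V → V → C
  g_symm : ∀ X Y, g X Y = g Y X
  g_add : ∀ X Y Z, g (X + Y) Z = g X Z + g Y Z
  g_smul : ∀ (f : C) X Y, g (f • X) Y = f * g X Y
  /-- the Levi-Civita connection -/
  nab : V → V → V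
  nab_addX : ∀ X Y Z, nab (X + Y) Z = nab X Z + nab Y Z
  nab_smulX : ∀ (f : C) X Y, nab (f • X) Y = f • nab X Y
  nab_add : ∀ X Y Z, nab X (Y + Z) = nab X Y + nab X Z
  nab_leibniz : ∀ X (f : C) Y, nab X (f • Y) = f • nab X Y + (D X f) • Y
  torsion_free : ∀ X Y, nab X Y - nab Y X = bracket X Y
  nab_metric : ∀ X Y Z, D X (g Y Z) = g (nab X Y) Z + g Y (nab X Z)
  /-- the (local) adapted basis of almost complex structures -/
  I : V → V
  J : V → V
  K : V → V
  I_lin : ∀ (f : C) X Y, I (f • X + Y) = f • I X + I Y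
  J_lin : ∀ (f : C) X Y, J (f • X + Y) = f • J X + J Y
  K_lin : ∀ (f : C) X Y, K (f • X + Y) = f • K X + K Y
  I_sq : ∀ X, I (I X) = -X
  J_sq : ∀ X, J (J X) = -X
  K_def : ∀ X, K X = I (J X)
  anticomm : ∀ X, I (J X) = -J (I X)
  I_metric : ∀ X Y, g (I X) (I Y) = g X Y
  J_metric : ∀ X Y, g (J X) (J Y) = g X Y
  /-- a (local) orthonormal frame -/
  frame : Fin (4 * n) → V
  frame_orthonormal : ∀ i j, g (frame i) (frame j) = if i = j then 1 else 0
  frame_span : ∀ X, X = ∑ i, g X (frame i) • frame i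

namespace AQH

section ops

variable {C V : Type*} [CommRing C]

/-- the operator `A_(1)` on covariant 3-tensors -/
def op1 (A : V → V) (ψ : V → V → V → C) : V → V → V → C := fun X Y Z => -ψ (A X) Y Z

/-- the operator `A_(2)` on covariant 3-tensors -/
def op2 (A : V → V) (ψ : V → V → V → C) : V → V → V → C := fun X Y Z => -ψ X (A Y) Z

/-- the operator `A_(3)` on covariant 3-tensors -/
def op3 (A : V → V) (ψ : V → V → V → C) : V → V → V → C := fun X Y Z => -ψ X Y (A Z)

/-- the operator `A_(12) = A_(1) A_(2)` on covariant 3-tensors -/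
def op12 (A : V → V) (ψ : V → V → V → C) : V → V → V → C := fun X Y Z => ψ (A X) (A Y) Z

/-- the operator `A_(13) = A_(1) A_(3)` on covariant 3-tensors -/
def op13 (A : V → V) (ψ : V → V → V → C) : V → V → V → C := fun X Y Z => ψ (A X) Y (A Z)

/-- the operator `A_(23) = A_(2) A_(3)` on covariant 3-tensors -/
def op23 (A : V → V) (ψ : V → V → V → C) : V → V → V → C := fun X Y Z => ψ X (A Y) (A Z)

/-- the operator `𝓛_A = A_(12) + A_(13) + A_(23)` on three-forms -/
def calL (A : V → V) (ψ : V → V → V → C) : V → V → V → C :=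
  fun X Y Z => op12 A ψ X Y Z + op13 A ψ X Y Z + op23 A ψ X Y Z

/-- the action `(A ν)(X) = -ν (A X)` of `A` on a one-form -/
def act1 (A : V → V) (ν : V → C) : V → C := fun X => -ν (A X)

/-- the action `(A ψ)(X,Y,Z) = -ψ(AX,AY,AZ)` of `A` on a three-form -/
def act3 (A : V → V) (ψ : V → V → V → C) : V → V → V → C :=
  fun X Y Z => -ψ (A X) (A Y) (A Z)

/-- wedge product of two one-forms -/
def wedge11 (α β : V → C) : V → V → C := fun X Y => α X * β Y - α Y * β X

/-- wedge product of a one-form and a two-form -/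
def wedge12 (ν : V → C) (ω : V → V → C) : V → V → V → C :=
  fun X Y Z => ν X * ω Y Z - ν Y * ω X Z + ν Z * ω X Y

/-- wedge product of two two-forms -/
def wedge22 (α β : V → V → C) : V → V → V → V → C := fun X Y Z W =>
  α X Y * β Z W - α X Z * β Y W + α X W * β Y Z
    + α Z W * β X Y - α Y W * β X Z + α Y Z * β X W

/-- a (0,3)-tensor is an alternating three-form -/
def IsAlt3 (T : V → V → V → C) : Prop :=
  (∀ X Y Z, T Y X Z = -T X Y Z) ∧ (∀ X Y Z, T X Z Y = -T X Y Z)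

variable [AddCommGroup V] [Module C V]

/-- `C`-linearity (tensoriality) of a three-form in its first argument -/
def Lin3 (T : V → V → V → C) : Prop :=
  ∀ (f : C) X X' Y Z, T (f • X + X') Y Z = f * T X Y Z + T X' Y Z

/-- `C`-linearity (tensoriality) of a one-form -/
def Lin1 (ν : V → C) : Prop := ∀ (f : C) X X', ν (f • X + X') = f * ν X + ν X'

end ops

section derived

variable {n : ℕ} {C V : Type*} [CommRing C] [Algebra ℝ C] [AddCommGroup V] [Module C V]
  [Module ℝ V] [IsScalarTower ℝ C V]

variable (M : AQH n C V)

/-- the Kähler form `ω_A(X,Y) = g(X, A Y)` -/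
def omega (A : V → V) : V → V → C := fun X Y => M.g X (A Y)

/-- `(∇_X A) Y` -/
def nabA (A : V → V) : V → V → V := fun X Y => M.nab X (A Y) - A (M.nab X Y)

/-- covariant derivative of a 2-form: `(∇_X ψ)(Y,Z)` -/
def nab2 (ψ : V → V → C) : V → V → V → C :=
  fun X Y Z => M.D X (ψ Y Z) - ψ (M.nab X Y) Z - ψ Y (M.nab X Z)

/-- covariant derivative of a 4-form -/
def nab4 (ψ : V → V → V → V → C) : V → V → V → V → V → C :=
  fun X Y Z W U => M.D X (ψ Y Z W U) - ψ (M.nab X Y) Z W U - ψ Y (M.nab X Z) W U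
    - ψ Y Z (M.nab X W) U - ψ Y Z W (M.nab X U)

/-- exterior derivative of a one-form -/
def d1 (ν : V → C) : V → V → C :=
  fun X Y => M.D X (ν Y) - M.D Y (ν X) - ν (M.bracket X Y)

/-- exterior derivative of a two-form -/
def d2 (ψ : V → V → C) : V → V → V → C :=
  fun X Y Z => M.D X (ψ Y Z) - M.D Y (ψ X Z) + M.D Z (ψ X Y)
    - ψ (M.bracket X Y) Z + ψ (M.bracket X Z) Y - ψ (M.bracket Y Z) X

/-- exterior derivative of a four-form -/
def d4 (ψ : V → V → V → V → C) : V → V → V → V → V → C := fun X Y Z W U =>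
  M.D X (ψ Y Z W U) - M.D Y (ψ X Z W U) + M.D Z (ψ X Y W U) - M.D W (ψ X Y Z U)
      + M.D U (ψ X Y Z W)
    - ψ (M.bracket X Y) Z W U + ψ (M.bracket X Z) Y W U - ψ (M.bracket X W) Y Z U
      + ψ (M.bracket X U) Y Z W
    - ψ (M.bracket Y Z) X W U + ψ (M.bracket Y W) X Z U - ψ (M.bracket Y U) X Z W
    - ψ (M.bracket Z W) X Y U + ψ (M.bracket Z U) X Y W
    - ψ (M.bracket W U) X Y Z

/-- the Nijenhuis tensor `N_A(X,Y)` -/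
def nijV (A : V → V) : V → V → V := fun X Y =>
  M.bracket X Y + A (M.bracket (A X) Y) + A (M.bracket X (A Y)) - M.bracket (A X) (A Y)

/-- the Nijenhuis `(0,3)`-tensor `N_A(X,Y,Z) = g(X, N_A(Y,Z))` -/
def nij3 (A : V → V) : V → V → V → C := fun X Y Z => M.g X (M.nijV A Y Z)

/-- the induced inner product of two 2-forms,
`⟨ψ,φ⟩ = (1/2!) ψ(e_i,e_j) φ(e_i,e_j)` -/
def inner2 (ψ φ : V → V → C) : C :=
  (1/2 : ℝ) • ∑ i, ∑ j, ψ (M.frame i) (M.frame j) * φ (M.frame i) (M.frame j)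

/-- the contraction `(Λ_A β)(X) = ⟨X ⌟ β, ω_A⟩` of a three-form -/
def Lam (A : V → V) (β : V → V → V → C) : V → C :=
  fun X => (1/2 : ℝ) •
    ∑ i, ∑ j, β X (M.frame i) (M.frame j) * M.omega A (M.frame i) (M.frame j)

/-- `λ_I(X) = (1/2n) ⟨∇_X ω_J, ω_K⟩` -/
def lambdaI : V → C := fun X =>
  (1/(2*(n:ℝ))) • M.inner2 (fun Y Z => M.nab2 (M.omega M.J) X Y Z) (M.omega M.K)

/-- `λ_J(X) = (1/2n) ⟨∇_X ω_K, ω_I⟩` -/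
def lambdaJ : V → C := fun X =>
  (1/(2*(n:ℝ))) • M.inner2 (fun Y Z => M.nab2 (M.omega M.K) X Y Z) (M.omega M.I)

/-- `λ_K(X) = (1/2n) ⟨∇_X ω_I, ω_J⟩` -/
def lambdaK : V → C := fun X =>
  (1/(2*(n:ℝ))) • M.inner2 (fun Y Z => M.nab2 (M.omega M.I) X Y Z) (M.omega M.J)

/-- codifferential of a two-form -/
def codiff2 (ψ : V → V → C) : V → C := fun Z => -∑ i, M.nab2 ψ (M.frame i) (M.frame i) Z

/-- codifferential of a four-form -/
def codiff4 (ψ : V → V → V → V → C) : V → V → V → C :=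
  fun X Y Z => -∑ i, M.nab4 ψ (M.frame i) (M.frame i) X Y Z

/-- `β_I = J dω_J + K dω_K` -/
def betaI : V → V → V → C := fun X Y Z =>
  act3 M.J (M.d2 (M.omega M.J)) X Y Z + act3 M.K (M.d2 (M.omega M.K)) X Y Z

/-- `β_J = K dω_K + I dω_I` -/
def betaJ : V → V → V → C := fun X Y Z =>
  act3 M.K (M.d2 (M.omega M.K)) X Y Z + act3 M.I (M.d2 (M.omega M.I)) X Y Z

/-- `β_K = I dω_I + J dω_J` -/
def betaK : V → V → V → C := fun X Y Z =>
  act3 M.I (M.d2 (M.omega M.I)) X Y Z + act3 M.J (M.d2 (M.omega M.J)) X Y Z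

/-- the intrinsic torsion
`ξ_X Y = -(1/4) Σ_A A (∇_X A) Y + (1/2) Σ_A λ_A(X) A Y` -/
def xi : V → V → V := fun X Y =>
  (-(1/4 : ℝ)) • (M.I (M.nabA M.I X Y) + M.J (M.nabA M.J X Y) + M.K (M.nabA M.K X Y))
    + (1/2 : ℝ) • (M.lambdaI X • M.I Y + M.lambdaJ X • M.J Y + M.lambdaK X • M.K Y)

/-- the one-form `ν^I_4 = I Λ_I β_I` -/
def nu4I : V → C := act1 M.I (M.Lam M.I M.betaI)

/-- the one-form `ν^J_4 = J Λ_J β_J` -/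
def nu4J : V → C := act1 M.J (M.Lam M.J M.betaJ)

/-- the one-form `ν^K_4 = K Λ_K β_K` -/
def nu4K : V → C := act1 M.K (M.Lam M.K M.betaK)

/-- `ν^I_3`, determined by `J Λ_J β_I = (1/(2n-1)) (ν^I_4 + (2n+1)(n-1) ν^I_3)` -/
def nu3I : V → C := fun X =>
  (1/((2*(n:ℝ)+1) * ((n:ℝ)-1))) •
    ((2*(n:ℝ)-1) • act1 M.J (M.Lam M.J M.betaI) X - M.nu4I X)

/-- `ν^J_3`, determined by `K Λ_K β_J = (1/(2n-1)) (ν^J_4 + (2n+1)(n-1) ν^J_3)` -/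
def nu3J : V → C := fun X =>
  (1/((2*(n:ℝ)+1) * ((n:ℝ)-1))) •
    ((2*(n:ℝ)-1) • act1 M.K (M.Lam M.K M.betaJ) X - M.nu4J X)

/-- `ν^K_3`, determined by `I Λ_I β_K = (1/(2n-1)) (ν^K_4 + (2n+1)(n-1) ν^K_3)` -/
def nu3K : V → C := fun X =>
  (1/((2*(n:ℝ)+1) * ((n:ℝ)-1))) •
    ((2*(n:ℝ)-1) • act1 M.I (M.Lam M.I M.betaK) X - M.nu4K X)

/-- `β^{(E)}_{3I} = -(1/2) Jν^I_3 ∧ ω_J - (1/2) Kν^I_3 ∧ ω_K + (1/(2n-1)) Iν^I_3 ∧ ω_I` -/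
def betaE3I : V → V → V → C := fun X Y Z =>
  (-(1/2:ℝ)) • wedge12 (act1 M.J M.nu3I) (M.omega M.J) X Y Z
    + (-(1/2:ℝ)) • wedge12 (act1 M.K M.nu3I) (M.omega M.K) X Y Z
    + (1/(2*(n:ℝ)-1)) • wedge12 (act1 M.I M.nu3I) (M.omega M.I) X Y Z

def betaE3J : V → V → V → C := fun X Y Z =>
  (-(1/2:ℝ)) • wedge12 (act1 M.K M.nu3J) (M.omega M.K) X Y Z
    + (-(1/2:ℝ)) • wedge12 (act1 M.I M.nu3J) (M.omega M.I) X Y Z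
    + (1/(2*(n:ℝ)-1)) • wedge12 (act1 M.J M.nu3J) (M.omega M.J) X Y Z

def betaE3K : V → V → V → C := fun X Y Z =>
  (-(1/2:ℝ)) • wedge12 (act1 M.I M.nu3K) (M.omega M.I) X Y Z
    + (-(1/2:ℝ)) • wedge12 (act1 M.J M.nu3K) (M.omega M.J) X Y Z
    + (1/(2*(n:ℝ)-1)) • wedge12 (act1 M.K M.nu3K) (M.omega M.K) X Y Z

/-- `β_{4I} = -(1/(2n-1)) Iν^I_4 ∧ ω_I` -/
def beta4I : V → V → V → C := fun X Y Z =>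
  (-(1/(2*(n:ℝ)-1))) • wedge12 (act1 M.I M.nu4I) (M.omega M.I) X Y Z

def beta4J : V → V → V → C := fun X Y Z =>
  (-(1/(2*(n:ℝ)-1))) • wedge12 (act1 M.J M.nu4J) (M.omega M.J) X Y Z

def beta4K : V → V → V → C := fun X Y Z =>
  (-(1/(2*(n:ℝ)-1))) • wedge12 (act1 M.K M.nu4K) (M.omega M.K) X Y Z

/-- `β_I^{(3+K)} = β_I - β^{(E)}_{3I} - β_{4I}` -/
def beta3KI : V → V → V → C := fun X Y Z => M.betaI X Y Z - M.betaE3I X Y Z - M.beta4I X Y Z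

def beta3KJ : V → V → V → C := fun X Y Z => M.betaJ X Y Z - M.betaE3J X Y Z - M.beta4J X Y Z

def beta3KK : V → V → V → C := fun X Y Z => M.betaK X Y Z - M.betaE3K X Y Z - M.beta4K X Y Z

/-- `β_I^{(3)} = (1/6) (2 - 𝓛_J - 𝓛_K) β_I^{(3+K)}` -/
def beta3I : V → V → V → C := fun X Y Z =>
  (1/6:ℝ) • ((2:ℝ) • M.beta3KI X Y Z - calL M.J M.beta3KI X Y Z - calL M.K M.beta3KI X Y Z)

def beta3J : V → V → V → C := fun X Y Z =>
  (1/6:ℝ) • ((2:ℝ) • M.beta3KJ X Y Z - calL M.K M.beta3KJ X Y Z - calL M.I M.beta3KJ X Y Z)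

def beta3K : V → V → V → C := fun X Y Z =>
  (1/6:ℝ) • ((2:ℝ) • M.beta3KK X Y Z - calL M.I M.beta3KK X Y Z - calL M.J M.beta3KK X Y Z)

/-- `β_I^{(K)} = (1/6) (4 + 𝓛_J + 𝓛_K) β_I^{(3+K)}` -/
def betaKI : V → V → V → C := fun X Y Z =>
  (1/6:ℝ) • ((4:ℝ) • M.beta3KI X Y Z + calL M.J M.beta3KI X Y Z + calL M.K M.beta3KI X Y Z)

def betaKJ : V → V → V → C := fun X Y Z =>
  (1/6:ℝ) • ((4:ℝ) • M.beta3KJ X Y Z + calL M.K M.beta3KJ X Y Z + calL M.I M.beta3KJ X Y Z)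

def betaKK : V → V → V → C := fun X Y Z =>
  (1/6:ℝ) • ((4:ℝ) • M.beta3KK X Y Z + calL M.I M.beta3KK X Y Z + calL M.J M.beta3KK X Y Z)

/-- the three-form `ψ^{(3)} = (1/12)(β_I^{(3)} + β_J^{(3)} + β_K^{(3)})` determining `ξ_{33}` -/
def psi3 : V → V → V → C := fun X Y Z =>
  (1/12:ℝ) • (M.beta3I X Y Z + M.beta3J X Y Z + M.beta3K X Y Z)

/-- the three-form `ψ^{(K)} = -(1/48)(β_I^{(K)} + β_J^{(K)} + β_K^{(K)})` determining `ξ_{KH}` -/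
def psiK : V → V → V → C := fun X Y Z =>
  (-(1/48:ℝ)) • (M.betaKI X Y Z + M.betaKJ X Y Z + M.betaKK X Y Z)

/-- the three-form `ψ^{(3)}_I` determining `ξ_{3H}` -/
def psi3I : V → V → V → C := fun X Y Z =>
  (-(1/8:ℝ)) • M.beta3I X Y Z
    + (1/48:ℝ) • ((3:ℝ) • (M.beta3I X Y Z + M.beta3J X Y Z + M.beta3K X Y Z)
        + calL M.I (fun a b c => M.beta3I a b c + M.beta3J a b c + M.beta3K a b c) X Y Z)

def psi3J : V → V → V → C := fun X Y Z =>
  (-(1/8:ℝ)) • M.beta3J X Y Z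
    + (1/48:ℝ) • ((3:ℝ) • (M.beta3I X Y Z + M.beta3J X Y Z + M.beta3K X Y Z)
        + calL M.J (fun a b c => M.beta3I a b c + M.beta3J a b c + M.beta3K a b c) X Y Z)

def psi3K : V → V → V → C := fun X Y Z =>
  (-(1/8:ℝ)) • M.beta3K X Y Z
    + (1/48:ℝ) • ((3:ℝ) • (M.beta3I X Y Z + M.beta3J X Y Z + M.beta3K X Y Z)
        + calL M.K (fun a b c => M.beta3I a b c + M.beta3J a b c + M.beta3K a b c) X Y Z)

/-- the three-form `ψ^{(K)}_I` determining `ξ_{K3}` -/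
def psiKI : V → V → V → C := fun X Y Z =>
  (-(1/2:ℝ)) • M.betaKI X Y Z
    + (1/6:ℝ) • (M.betaKI X Y Z + M.betaKJ X Y Z + M.betaKK X Y Z)

def psiKJ : V → V → V → C := fun X Y Z =>
  (-(1/2:ℝ)) • M.betaKJ X Y Z
    + (1/6:ℝ) • (M.betaKI X Y Z + M.betaKJ X Y Z + M.betaKK X Y Z)

def psiKK : V → V → V → C := fun X Y Z =>
  (-(1/2:ℝ)) • M.betaKK X Y Z
    + (1/6:ℝ) • (M.betaKI X Y Z + M.betaKJ X Y Z + M.betaKK X Y Z)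

/-- the one-form `θ^ξ` determining `ξ_{EH}`,
defined by `(6/n)(2n+1)(n-1) θ^ξ(X) = -⟨ξ_{e_i} e_i, X⟩` -/
def thetaXi : V → C := fun X =>
  (-((n:ℝ)/(6*(2*(n:ℝ)+1)*((n:ℝ)-1)))) • ∑ i, M.g (M.xi (M.frame i) (M.frame i)) X

/-- the local one-form `θ^ξ_I`, defined by `(2/n)(2n+1)(n-1) θ^ξ_I(X) = -⟨I ξ_{e_i} I e_i, X⟩` -/
def thetaXiI : V → C := fun X =>
  (-((n:ℝ)/(2*(2*(n:ℝ)+1)*((n:ℝ)-1)))) •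
    ∑ i, M.g (M.I (M.xi (M.frame i) (M.I (M.frame i)))) X

def thetaXiJ : V → C := fun X =>
  (-((n:ℝ)/(2*(2*(n:ℝ)+1)*((n:ℝ)-1)))) •
    ∑ i, M.g (M.J (M.xi (M.frame i) (M.J (M.frame i)))) X

def thetaXiK : V → C := fun X =>
  (-((n:ℝ)/(2*(2*(n:ℝ)+1)*((n:ℝ)-1)))) •
    ∑ i, M.g (M.K (M.xi (M.frame i) (M.K (M.frame i)))) X

/-- `α_I = -λ_I ⊗ g + (1/2)(J_(2) - J_(3)) ∇ω_K` -/
def alphaI : V → V → V → C := fun X Y Z =>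
  -(M.lambdaI X * M.g Y Z)
    + (1/2:ℝ) • (-(M.nab2 (M.omega M.K) X (M.J Y) Z) + M.nab2 (M.omega M.K) X Y (M.J Z))

def alphaJ : V → V → V → C := fun X Y Z =>
  -(M.lambdaJ X * M.g Y Z)
    + (1/2:ℝ) • (-(M.nab2 (M.omega M.I) X (M.K Y) Z) + M.nab2 (M.omega M.I) X Y (M.K Z))

def alphaK : V → V → V → C := fun X Y Z =>
  -(M.lambdaK X * M.g Y Z)
    + (1/2:ℝ) • (-(M.nab2 (M.omega M.J) X (M.I Y) Z) + M.nab2 (M.omega M.J) X Y (M.I Z))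

/-- the one-form `η_I(X) = α_I(e_i; e_i, X)` -/
def etaI : V → C := fun X => ∑ i, M.alphaI (M.frame i) (M.frame i) X

def etaJ : V → C := fun X => ∑ i, M.alphaJ (M.frame i) (M.frame i) X

def etaK : V → C := fun X => ∑ i, M.alphaK (M.frame i) (M.frame i) X

/-- the fundamental four-form `Ω = Σ_A ω_A ∧ ω_A` -/
def Omega4 : V → V → V → V → C := fun X Y Z W =>
  wedge22 (M.omega M.I) (M.omega M.I) X Y Z W
    + wedge22 (M.omega M.J) (M.omega M.J) X Y Z W
    + wedge22 (M.omega M.K) (M.omega M.K) X Y Z W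

/-- the one-form `θ^{d*Ω} = (1/3) Σ_A A Λ_A d*Ω` -/
def thetaDOmega : V → C := fun X =>
  (1/3:ℝ) • (act1 M.I (M.Lam M.I (M.codiff4 M.Omega4)) X
    + act1 M.J (M.Lam M.J (M.codiff4 M.Omega4)) X
    + act1 M.K (M.Lam M.K (M.codiff4 M.Omega4)) X)

/-- the vector-valued torsion: `g(W, T(X,Y)) = T(W,X,Y)` -/
def Tvec (T : V → V → V → C) : V → V → V := fun X Y => ∑ i, T (M.frame i) X Y • M.frame i

/-- the connection `∇ + (1/2) T` associated to a torsion (0,3)-tensor `T` -/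
def nabT (T : V → V → V → C) : V → V → V := fun X Y => M.nab X Y + (1/2:ℝ) • M.Tvec T X Y

/-- a connection is metric -/
def MetricConn (nab' : V → V → V) : Prop :=
  ∀ X Y Z, M.D X (M.g Y Z) = M.g (nab' X Y) Z + M.g Y (nab' X Z)

/-- a connection is quaternionic, with associated local one-forms `γ_I, γ_J, γ_K`:
`∇'_X I = γ_K(X) J - γ_J(X) K`, and cyclically -/
def QuatConn (nab' : V → V → V) (γI γJ γK : V → C) : Prop :=
  (∀ X Y, nab' X (M.I Y) - M.I (nab' X Y) = γK X • M.J Y - γJ X • M.K Y) ∧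
  (∀ X Y, nab' X (M.J Y) - M.J (nab' X Y) = γI X • M.K Y - γK X • M.I Y) ∧
  (∀ X Y, nab' X (M.K Y) - M.K (nab' X Y) = γJ X • M.I Y - γI X • M.J Y)

/-- the HKT condition: `I, J, K` integrable and there is a metric connection
`∇ + (1/2)T` with totally skew torsion making `I, J, K` parallel -/
def IsHKT : Prop :=
  (∀ X Y, M.nijV M.I X Y = 0) ∧ (∀ X Y, M.nijV M.J X Y = 0) ∧
  (∀ X Y, M.nijV M.K X Y = 0) ∧
  ∃ T : V → V → V → C, IsAlt3 T ∧ Lin3 T ∧ M.MetricConn (M.nabT T) ∧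
    (∀ X Y, M.nabT T X (M.I Y) = M.I (M.nabT T X Y)) ∧
    (∀ X Y, M.nabT T X (M.J Y) = M.J (M.nabT T X Y)) ∧
    (∀ X Y, M.nabT T X (M.K Y) = M.K (M.nabT T X Y))

/-- membership of a three-form in `KH`: type `{2,1}` for each `A` and `Λ_A ψ = 0` -/
def InKH3 (ψ : V → V → V → C) : Prop :=
  IsAlt3 ψ ∧ Lin3 ψ ∧
  calL M.I ψ = ψ ∧ calL M.J ψ = ψ ∧ calL M.K ψ = ψ ∧
  M.Lam M.I ψ = 0 ∧ M.Lam M.J ψ = 0 ∧ M.Lam M.K ψ = 0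

/-- the `(0,3)`-tensor of the `KH`-component of the torsion determined by `ψ^{(K)}`:
`3ψ - Σ_A A_(23) ψ` -/
def xiKH3 (ψ : V → V → V → C) : V → V → V → C := fun X Y Z =>
  (3:ℝ) • ψ X Y Z - (op23 M.I ψ X Y Z + op23 M.J ψ X Y Z + op23 M.K ψ X Y Z)

/-- the `(0,3)`-tensor of the `EH`-component of the torsion determined by the
one-form `θ`: `3 e_i ⊗ e_i ∧ θ - Σ_A (e_i ⊗ A e_i ∧ A θ + (2/n) A θ ⊗ ω_A)` -/
def xiEH3 (θ : V → C) : V → V → V → C := fun X Y Z =>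
  (3:ℝ) • ∑ i, M.g (M.frame i) X *
      (M.g (M.frame i) Y * θ Z - M.g (M.frame i) Z * θ Y)
  - ((∑ i, M.g (M.frame i) X *
        (M.g (M.I (M.frame i)) Y * act1 M.I θ Z - M.g (M.I (M.frame i)) Z * act1 M.I θ Y))
    + (∑ i, M.g (M.frame i) X *
        (M.g (M.J (M.frame i)) Y * act1 M.J θ Z - M.g (M.J (M.frame i)) Z * act1 M.J θ Y))
    + (∑ i, M.g (M.frame i) X *
        (M.g (M.K (M.frame i)) Y * act1 M.K θ Z - M.g (M.K (M.frame i)) Z * act1 M.K θ Y)))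
  - (2/(n:ℝ)) • (act1 M.I θ X * M.omega M.I Y Z + act1 M.J θ X * M.omega M.J Y Z
      + act1 M.K θ X * M.omega M.K Y Z)

/-- the intrinsic torsion lies in `(K+E)H`: it is the sum of a `KH`-tensor and an
`EH`-tensor as described in §3 of the paper -/
def inKEH : Prop :=
  ∃ (ψ : V → V → V → C) (θ : V → C), M.InKH3 ψ ∧ Lin1 θ ∧
    ∀ X Y Z, M.g Y (M.xi X Z) = M.xiKH3 ψ X Y Z + M.xiEH3 θ X Y Z

end derived

end AQH

/-!
By uniqueness of the Levi-Civita connection, `∇°_X Y = ∇_X Y + dσ(X) Y + dσ(Y) X - g(X, Y) grad σ`,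
so for each almost complex structure `A` of the basis `∇°A - ∇A` is algebraic in `dσ`. All the
one-forms considered are metric traces of bilinear forms. Such a trace does not depend on the
orthonormal frame, and `e^{2σ} tr° = tr`; this yields the rules for `d*ω_A`, `λ_A`, `ν^A_3` and
`ν^A_4`. Substituting `∇°A` and `λ_A°` into the formula for the intrinsic torsion shows that
`ξ° - ξ` is the `EH`-tensor of `-(1/4) dσ`. Taking traces of that tensor gives the rules for `θ^ξ`
and `θ^ξ_A`, and the `EH`-component of `ξ` absorbs the whole change.

Each statement about `J` or `K` is the statement about `I` for the adapted basis `(J, K, I)` or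
`(K, I, J)`.
-/

namespace AQH

section Metric

theorem eq_zero_of_symm_of_skew {C V : Type*} [AddCommGroup C] [IsAddTorsionFree C]
    {T : V → V → V → C} (symm : ∀ X Y Z, T X Y Z = T Y X Z)
    (skew : ∀ X Y Z, T X Y Z = -T X Z Y) (X Y Z : V) : T X Y Z = 0 :=
  self_eq_neg.mp <| calc
    T X Y Z = -T X Z Y := skew X Y Z
    _ = -T Z X Y := by rw [symm]
    _ = T Z Y X := by rw [skew Z X Y, neg_neg]
    _ = T Y Z X := symm Z Y X
    _ = -T Y X Z := skew Y Z X
    _ = -T X Y Z := by rw [symm]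

variable {n : ℕ} {C V : Type*} [CommRing C] [Algebra ℝ C] [AddCommGroup V] [Module C V]
  (M : AQH n C V)

theorem isLinearMap_D (f : C) : IsLinearMap C fun X => M.D X f :=
  ⟨fun X Y => M.D_addX X Y f, fun c X => M.D_smulX c X f⟩

theorem D_neg_left (X : V) (f : C) : M.D (-X) f = -M.D X f := (M.isLinearMap_D f).map_neg X

theorem g_add_right (X Y Z : V) : M.g X (Y + Z) = M.g X Y + M.g X Z := by
  rw [M.g_symm, M.g_add, M.g_symm Y, M.g_symm Z]

theorem g_smul_right (f : C) (X Y : V) : M.g X (f • Y) = f * M.g X Y := by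
  rw [M.g_symm, M.g_smul, M.g_symm Y]

theorem isBilinearMap_g : IsBilinearMap C M.g :=
  ⟨M.g_add, M.g_smul, M.g_add_right, fun f X Y => M.g_smul_right f X Y⟩

theorem isLinearMap_g (X : V) : IsLinearMap C (M.g X) :=
  ⟨M.g_add_right X, fun f Y => M.g_smul_right f X Y⟩

theorem g_neg_left (X Y : V) : M.g (-X) Y = -M.g X Y :=
  M.isBilinearMap_g.toLinearMap.map_neg₂ X Y

theorem g_sub_left (X Y Z : V) : M.g (X - Y) Z = M.g X Z - M.g Y Z :=
  M.isBilinearMap_g.toLinearMap.map_sub₂ X Y Z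

theorem g_neg_right (X Y : V) : M.g X (-Y) = -M.g X Y := (M.isLinearMap_g X).map_neg Y

theorem g_sub_right (X Y Z : V) : M.g X (Y - Z) = M.g X Y - M.g X Z :=
  (M.isLinearMap_g X).map_sub Y Z

theorem sum_map_frame_mul_g {ν : V → C} (hν : IsLinearMap C ν) (X : V) :
    ∑ i, ν (M.frame i) * M.g X (M.frame i) = ν X := by
  conv_rhs => rw [M.frame_span X, ← hν.mk'_apply, map_sum]
  simp only [hν.mk'_apply, hν.map_smul, smul_eq_mul, mul_comm]

theorem ext_g {X Y : V} (h : ∀ Z, M.g X Z = M.g Y Z) : X = Y := by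
  rw [M.frame_span X, M.frame_span Y]
  simp only [h]

/-- The gradient of a function, the vector field `g`-dual to its differential. -/
def grad (f : C) : V := ∑ i, M.D (M.frame i) f • M.frame i

theorem g_grad_right (f : C) (X : V) : M.g X (M.grad f) = M.D X f := by
  rw [grad, ← (M.isLinearMap_g X).mk'_apply, map_sum, ← M.sum_map_frame_mul_g (M.isLinearMap_D f)]
  simp only [map_smul, IsLinearMap.mk'_apply, smul_eq_mul]

theorem g_grad_left (f : C) (X : V) : M.g (M.grad f) X = M.D X f := by
  rw [M.g_symm, M.g_grad_right]

end Metric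

section Hermitian

variable {n : ℕ} {C V : Type*} [CommRing C] [Algebra ℝ C] [AddCommGroup V] [Module C V]
  {M : AQH n C V} {A B : V → V}

/-- `A` is an almost complex structure compatible with the metric of `M`; compatibility is encoded
as skew-symmetry, which for `A² = -1` amounts to `A` being an isometry. -/
structure IsHermitian (M : AQH n C V) (A : V → V) : Prop extends IsLinearMap C A where
  sq : ∀ X, A (A X) = -X
  skew : ∀ X Y, M.g (A X) Y = -M.g X (A Y)

theorem IsHermitian.of_isometry (hlin : ∀ (f : C) X Y, A (f • X + Y) = f • A X + A Y)
    (hsq : ∀ X, A (A X) = -X) (hg : ∀ X Y, M.g (A X) (A Y) = M.g X Y) : M.IsHermitian A where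
  map_add X Y := by simpa only [one_smul] using hlin 1 X Y
  map_smul f X := by
    have map_zero : A 0 = 0 := by simpa using hlin 1 0 0
    simpa only [add_zero, map_zero] using hlin f X 0
  sq := hsq
  skew X Y := by rw [← hg X (A Y), hsq, M.g_neg_right, neg_neg]

theorem IsHermitian.isometry (hA : M.IsHermitian A) (X Y : V) : M.g (A X) (A Y) = M.g X Y := by
  rw [hA.skew, hA.sq, M.g_neg_right, neg_neg]

theorem IsHermitian.g_map_comm (hA : M.IsHermitian A) (X Y : V) : M.g X (A Y) = -M.g Y (A X) := by
  rw [← hA.skew, M.g_symm]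

theorem IsHermitian.comp_isLinearMap (hA : M.IsHermitian A) {ν : V → C} (hν : IsLinearMap C ν) :
    IsLinearMap C fun X => ν (A X) :=
  (hν.mk' ν ∘ₗ hA.toIsLinearMap.mk' A).isLinear

theorem IsHermitian.isBilinearMap_comp_right (hA : M.IsHermitian A) {ψ : V → V → C}
    (hψ : IsBilinearMap C ψ) : IsBilinearMap C fun X Y => ψ X (A Y) :=
  ⟨fun X Y Z => hψ.add_left X Y (A Z), fun c X Y => hψ.smul_left c X (A Y),
    fun X Y Z => by rw [hA.map_add, hψ.add_right],
    fun c X Y => by rw [hA.map_smul, hψ.smul_right]⟩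

theorem IsHermitian.isLinearMap_act1 (hA : M.IsHermitian A) {ν : V → C} (hν : IsLinearMap C ν) :
    IsLinearMap C (act1 A ν) :=
  (-(hA.comp_isLinearMap hν).mk').isLinear

theorem IsHermitian.g_self_map (hA : M.IsHermitian A) (X : V) : M.g X (A X) = 0 := by
  have : IsAddTorsionFree C := .of_isTorsionFree ℝ C
  exact self_eq_neg.mp (by rw [← hA.skew, M.g_symm])

theorem IsHermitian.g_self_map_map (hA : M.IsHermitian A) (hB : M.IsHermitian B)
    (hAB : ∀ X, A (B X) = -B (A X)) (X : V) : M.g X (A (B X)) = 0 := by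
  have : IsAddTorsionFree C := .of_isTorsionFree ℝ C
  exact self_eq_neg.mp <| calc
    M.g X (A (B X)) = -M.g X (B (A X)) := by rw [hAB, M.g_neg_right]
    _ = M.g (A X) (B X) := by rw [M.g_symm (A X), hB.skew]
    _ = -M.g X (A (B X)) := hA.skew X (B X)

variable (M)

theorem I_J (X : V) : M.I (M.J X) = M.K X := (M.K_def X).symm

theorem isHermitian_I : M.IsHermitian M.I := .of_isometry M.I_lin M.I_sq M.I_metric

theorem isHermitian_J : M.IsHermitian M.J := .of_isometry M.J_lin M.J_sq M.J_metric

theorem J_I (X : V) : M.J (M.I X) = -M.K X := by rw [M.K_def, M.anticomm, neg_neg]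

theorem I_K (X : V) : M.I (M.K X) = -M.J X := by rw [M.K_def, M.I_sq]

theorem K_J (X : V) : M.K (M.J X) = -M.I X := by rw [M.K_def, M.J_sq, M.isHermitian_I.map_neg]

theorem K_I (X : V) : M.K (M.I X) = M.J X := by
  rw [M.K_def, M.J_I, M.isHermitian_I.map_neg, M.I_K, neg_neg]

theorem J_K (X : V) : M.J (M.K X) = M.I X := by
  rw [M.K_def, M.anticomm, M.isHermitian_J.map_neg, M.J_sq, neg_neg]

theorem isHermitian_K : M.IsHermitian M.K :=
  .of_isometry M.K_lin (fun X => by rw [M.K_def, M.J_K, M.I_sq])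
    fun X Y => by rw [M.K_def, M.K_def, M.I_metric, M.J_metric]

/-- The same manifold with the adapted basis `(J, K, I)`: results about the first member of the
basis, applied to `M.rot` and `M.rot.rot`, yield those about the other two. -/
def rot : AQH n C V :=
  { M with
    I := M.J, J := M.K, K := M.I
    I_lin := M.J_lin, J_lin := M.K_lin, K_lin := M.I_lin
    I_sq := M.J_sq, J_sq := M.isHermitian_K.sq
    K_def := fun X => (M.J_K X).symm
    anticomm := fun X => by rw [M.J_K, M.K_J, neg_neg]
    I_metric := M.J_metric
    J_metric := M.isHermitian_K.isometry }

end Hermitian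

section Trace

variable {n : ℕ} {C V : Type*} [CommRing C] [Algebra ℝ C] [AddCommGroup V] [Module C V]
  (M : AQH n C V) {A B : V → V} {ν : V → C}

/-- The trace of a bilinear form with respect to the metric of `M`. -/
def trace (T : V → V → C) : C := ∑ i, T (M.frame i) (M.frame i)

variable {M}

theorem trace_congr {T S : V → V → C} (h : ∀ X, T X X = S X X) : M.trace T = M.trace S :=
  Finset.sum_congr rfl fun _ _ => h _

theorem trace_add (T S : V → V → C) :
    M.trace (fun X Y => T X Y + S X Y) = M.trace T + M.trace S :=
  Finset.sum_add_distrib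

theorem trace_sub (T S : V → V → C) :
    M.trace (fun X Y => T X Y - S X Y) = M.trace T - M.trace S :=
  Finset.sum_sub_distrib _ _

theorem trace_const_mul (c : C) (T : V → V → C) :
    M.trace (fun X Y => c * T X Y) = c * M.trace T :=
  (Finset.mul_sum _ _ _).symm

theorem trace_smul (r : ℝ) (T : V → V → C) :
    M.trace (fun X Y => r • T X Y) = r • M.trace T :=
  Finset.smul_sum.symm

theorem trace_g : M.trace M.g = 4 * (n : C) := by
  simp [trace, M.frame_orthonormal]

theorem trace_map_mul_g (hν : IsLinearMap C ν) (Z : V) :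
    M.trace (fun X Y => ν X * M.g Z Y) = ν Z :=
  M.sum_map_frame_mul_g hν Z

theorem IsHermitian.trace_map_mul_g_map (hA : M.IsHermitian A) (hν : IsLinearMap C ν) (Z : V) :
    M.trace (fun X Y => ν X * M.g Z (A Y)) = -ν (A Z) := by
  rw [← hν.map_neg, ← hA.map_neg, ← trace_map_mul_g hν]
  exact trace_congr fun X => by rw [hA.skew, M.g_neg_left, neg_neg]

theorem IsHermitian.trace_map_map_mul_g_map (hA : M.IsHermitian A) (hν : IsLinearMap C ν) (Z : V) :
    M.trace (fun X Y => ν (A X) * M.g Z (A Y)) = ν Z := by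
  rw [hA.trace_map_mul_g_map (hA.comp_isLinearMap hν), hA.sq, hν.map_neg, neg_neg]

end Trace

section Conformal

variable {n : ℕ} {C V : Type*} [CommRing C] [Algebra ℝ C] [AddCommGroup V] [Module C V]

theorem nab_unique (M : AQH n C V) {nab' : V → V → V}
    (torsion_free : ∀ X Y, nab' X Y - nab' Y X = M.bracket X Y)
    (metric : ∀ X Y Z, M.D X (M.g Y Z) = M.g (nab' X Y) Z + M.g Y (nab' X Z)) (X Y : V) :
    nab' X Y = M.nab X Y := by
  have : IsAddTorsionFree C := .of_isTorsionFree ℝ C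
  refine M.ext_g fun Z => sub_eq_zero.mp ?_
  refine eq_zero_of_symm_of_skew (T := fun X Y Z => M.g (nab' X Y) Z - M.g (M.nab X Y) Z)
    (fun X Y Z => ?_) (fun X Y Z => ?_) X Y Z
  · have difference_symm : nab' X Y - M.nab X Y = nab' Y X - M.nab Y X := by
      rw [sub_eq_sub_iff_sub_eq_sub, torsion_free, M.torsion_free]
    rw [← M.g_sub_left, ← M.g_sub_left, difference_symm]
  · linear_combination M.nab_metric X Y Z - metric X Y Z - M.g_symm Y (nab' X Z)
      + M.g_symm Y (M.nab X Z)

/-- `N` is a conformal rescaling of `M`: the same manifold and almost complex structures with the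
metric `e^{2σ} g`. The factor `e^σ` is represented by a function `es` satisfying the differential
equation of the exponential; the orthonormal frames of `M` and `N` are unrelated. -/
structure IsConformal (M N : AQH n C V) (σ es : C) : Prop where
  D_eq : N.D = M.D
  bracket_eq : N.bracket = M.bracket
  g_eq : ∀ X Y, N.g X Y = es * es * M.g X Y
  I_eq : N.I = M.I
  J_eq : N.J = M.J
  D_factor : ∀ X, M.D X es = es * M.D X σ

namespace IsConformal

variable {M N : AQH n C V} {σ es : C} (h : M.IsConformal N σ es)
include h

theorem K_eq : N.K = M.K := by
  ext X
  rw [N.K_def, M.K_def, h.I_eq, h.J_eq]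

theorem rot : M.rot.IsConformal N.rot σ es :=
  ⟨h.D_eq, h.bracket_eq, h.g_eq, h.J_eq, h.K_eq, h.D_factor⟩

theorem isHermitian {A : V → V} (hA : M.IsHermitian A) : N.IsHermitian A where
  toIsLinearMap := hA.toIsLinearMap
  sq := hA.sq
  skew X Y := by rw [h.g_eq, h.g_eq, hA.skew, mul_neg]

theorem D_factor_sq_mul (X : V) (f : C) :
    M.D X (es * es * f) = es * es * (M.D X f + 2 * M.D X σ * f) := by
  rw [M.D_mul, M.D_mul, h.D_factor]
  ring

theorem nab_eq (X Y : V) :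
    N.nab X Y = M.nab X Y + M.D X σ • Y + M.D Y σ • X - M.g X Y • M.grad σ := by
  refine (N.nab_unique (nab' := fun X Y =>
    M.nab X Y + M.D X σ • Y + M.D Y σ • X - M.g X Y • M.grad σ)
    (fun X Y => ?_) (fun X Y Z => ?_) X Y).symm
  · rw [h.bracket_eq, ← M.torsion_free, M.g_symm Y X]
    abel
  · simp only [h.D_eq, h.g_eq, h.D_factor_sq_mul, M.nab_metric, M.g_sub_left, M.g_sub_right,
      M.g_add, M.g_add_right, M.g_smul, M.g_smul_right, M.g_grad_left, M.g_grad_right,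
      M.g_symm Y X]
    ring

theorem mul_trace {T : V → V → C} (hT : IsBilinearMap C T) :
    es * es * N.trace T = M.trace T := by
  have expand (X : V) : T X X = ∑ k, T (M.frame k) X * M.g X (M.frame k) :=
    (M.sum_map_frame_mul_g (ν := fun Y => T Y X) ⟨fun Y Z => hT.add_left Y Z X,
      fun c Y => hT.smul_left c Y X⟩ X).symm
  calc es * es * N.trace T
      = ∑ k, ∑ j, T (M.frame k) (N.frame j) * N.g (M.frame k) (N.frame j) := by
        simp only [trace, expand (N.frame _), h.g_eq, M.g_symm (N.frame _)]
        rw [Finset.sum_comm, Finset.mul_sum]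
        exact Finset.sum_congr rfl fun k _ => by
          rw [Finset.mul_sum]
          exact Finset.sum_congr rfl fun j _ => by ring
    _ = M.trace T := Finset.sum_congr rfl fun k _ =>
        N.sum_map_frame_mul_g ⟨hT.add_right (M.frame k), fun c X => hT.smul_right c _ X⟩ _

theorem trace_eq {T S : V → V → C} (hS : IsBilinearMap C S) (hTS : ∀ X Y, T X Y = es * es * S X Y) :
    N.trace T = M.trace S := by
  rw [← h.mul_trace hS, ← trace_const_mul]
  exact trace_congr fun X => hTS X X

end IsConformal

end Conformal

section KahlerForm

variable {n : ℕ} {C V : Type*} [CommRing C] [Algebra ℝ C] [AddCommGroup V] [Module C V]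
  {M N : AQH n C V} {A B : V → V} {σ es : C}

theorem IsHermitian.isBilinearMap_nabA (hA : M.IsHermitian A) : IsBilinearMap C (M.nabA A) where
  add_left X Y Z := by simp only [nabA, M.nab_addX, hA.map_add]; abel
  smul_left c X Y := by simp only [nabA, M.nab_smulX, hA.map_smul, smul_sub]
  add_right X Y Z := by simp only [nabA, M.nab_add, hA.map_add]; abel
  smul_right c X Y := by
    simp only [nabA, M.nab_leibniz, hA.map_add, hA.map_smul, smul_sub]
    abel

theorem nab2_omega (X Y Z : V) : M.nab2 (M.omega A) X Y Z = M.g Y (M.nabA A X Z) := by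
  simp only [nab2, omega, nabA, M.nab_metric, M.g_sub_right]
  ring

theorem IsHermitian.d2_omega (hA : M.IsHermitian A) (X Y Z : V) :
    M.d2 (M.omega A) X Y Z
      = M.g Y (M.nabA A X Z) - M.g X (M.nabA A Y Z) + M.g X (M.nabA A Z Y) := by
  simp only [d2, omega, nabA, M.nab_metric, ← M.torsion_free, M.g_sub_left, M.g_sub_right]
  linear_combination hA.g_map_comm (M.nab X Z) Y - hA.g_map_comm (M.nab Y Z) X
    + hA.g_map_comm (M.nab Z Y) X

theorem IsHermitian.isBilinearMap_act3_d2_omega (hA : M.IsHermitian A) (X : V) :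
    IsBilinearMap C (act3 A (M.d2 (M.omega A)) X) := by
  have hnab := hA.isBilinearMap_nabA
  constructor <;> intros <;>
    simp only [act3, hA.d2_omega, hA.map_add, hA.map_smul, hnab.add_left, hnab.smul_left,
      hnab.add_right, hnab.smul_right, M.g_add, M.g_smul, M.g_add_right, M.g_smul_right,
      smul_eq_mul] <;>
    ring

theorem IsHermitian.isBilinearMap_wedge12_omega (hA : M.IsHermitian A) {ν : V → C}
    (hν : IsLinearMap C ν) (X : V) : IsBilinearMap C (wedge12 ν (M.omega A) X) := by
  constructor <;> intros <;>
    simp only [wedge12, omega, hA.map_add, hA.map_smul, hν.map_add, hν.map_smul, M.g_add, M.g_smul,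
      M.g_add_right, M.g_smul_right, smul_eq_mul] <;>
    ring

theorem IsHermitian.act3_wedge12_omega (hA : M.IsHermitian A) (ν : V → C) :
    act3 A (wedge12 ν (M.omega A)) = wedge12 (act1 A ν) (M.omega A) := by
  funext X Y Z
  simp only [act3, act1, wedge12, omega, hA.isometry]
  ring

theorem codiff2_omega (Z : V) :
    M.codiff2 (M.omega A) Z = -M.trace fun X Y => M.g Y (M.nabA A X Z) := by
  simp only [codiff2, nab2_omega, trace]

theorem IsHermitian.inner2_omega (hB : M.IsHermitian B) {ψ : V → V → C}
    (hψ : ∀ X, IsLinearMap C (ψ X)) :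
    M.inner2 ψ (M.omega B) = -((1 / 2 : ℝ) • M.trace fun X Y => ψ X (B Y)) := by
  rw [inner2, trace, ← smul_neg, ← Finset.sum_neg_distrib]
  congr 1
  refine Finset.sum_congr rfl fun i _ => ?_
  rw [← (hψ _).map_neg, ← M.sum_map_frame_mul_g (hψ _)]
  exact Finset.sum_congr rfl fun j _ => by rw [omega, M.g_neg_left, hB.skew, neg_neg]

theorem Lam_add (β γ : V → V → V → C) (X : V) :
    M.Lam B (fun X Y Z => β X Y Z + γ X Y Z) X = M.Lam B β X + M.Lam B γ X := by
  simp only [Lam, add_mul, Finset.sum_add_distrib, smul_add]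

theorem Lam_smul (r : ℝ) (β : V → V → V → C) (X : V) :
    M.Lam B (fun X Y Z => r • β X Y Z) X = r • M.Lam B β X := by
  simp only [Lam, smul_mul_assoc, ← Finset.smul_sum, smul_comm r]

theorem IsHermitian.Lam_wedge12_omega (hA : M.IsHermitian A) (hB : M.IsHermitian B) {ν : V → C}
    (hν : IsLinearMap C ν) (X : V) :
    M.Lam B (wedge12 ν (M.omega A)) X
      = ν (B (A X)) - (1 / 2 : ℝ) • (ν X * M.trace fun Y Z => M.g Y (A (B Z))) := by
  have hψ := hA.isBilinearMap_wedge12_omega hν X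
  have trace_eq : (M.trace fun Y Z => wedge12 ν (M.omega A) X Y (B Z))
      = ν X * (M.trace fun Y Z => M.g Y (A (B Z))) - 2 * ν (B (A X)) := calc
    _ = M.trace fun Y Z => ν X * M.g Y (A (B Z)) + ν Y * M.g (A X) (B Z)
          + ν (B Y) * M.g X (A Z) :=
        trace_congr fun Y => by
          rw [wedge12, omega, omega, omega, hA.skew]
          ring
    _ = _ := by
        rw [trace_add, trace_add, trace_const_mul, hB.trace_map_mul_g_map hν,
          hA.trace_map_mul_g_map (hB.comp_isLinearMap hν)]
        ring
  refine (hB.inner2_omega fun Y => ⟨hψ.add_right Y, fun c Z => hψ.smul_right c Y Z⟩).trans ?_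
  rw [trace_eq]
  algebra

theorem IsHermitian.Lam_wedge12_omega_self (hA : M.IsHermitian A) {ν : V → C}
    (hν : IsLinearMap C ν) (X : V) :
    M.Lam A (wedge12 ν (M.omega A)) X = (2 * (n : ℝ) - 1) • ν X := by
  have trace_eq : (M.trace fun Y Z => M.g Y (A (A Z))) = -(4 * (n : C)) := by
    rw [← M.trace_g, ← neg_one_mul, ← trace_const_mul]
    exact trace_congr fun Y => by rw [hA.sq, M.g_neg_right, neg_one_mul]
  rw [hA.Lam_wedge12_omega hA hν, trace_eq, hA.sq, hν.map_neg]
  algebra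

theorem IsHermitian.Lam_wedge12_omega_of_anticomm (hA : M.IsHermitian A) (hB : M.IsHermitian B)
    (hAB : ∀ X, A (B X) = -B (A X)) {ν : V → C} (hν : IsLinearMap C ν) (X : V) :
    M.Lam B (wedge12 ν (M.omega A)) X = ν (B (A X)) := by
  have trace_eq : (M.trace fun Y Z => M.g Y (A (B Z))) = 0 :=
    Finset.sum_eq_zero fun i _ => hA.g_self_map_map hB hAB _
  rw [hA.Lam_wedge12_omega hB hν, trace_eq, mul_zero, smul_zero, sub_zero]

theorem lambdaI_eq_trace (X : V) :
    M.lambdaI X = -((1 / (4 * (n : ℝ))) • M.trace fun Y Z => M.g Z (M.nabA M.J X (M.K Y))) := by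
  have hnab := M.isHermitian_J.isBilinearMap_nabA
  rw [lambdaI, M.isHermitian_K.inner2_omega fun Y => ⟨fun Z W => by
    simp only [nab2_omega, hnab.add_right, M.g_add_right], fun c Z => by
    simp only [nab2_omega, hnab.smul_right, M.g_smul_right, smul_eq_mul]⟩]
  rw [smul_neg, smul_smul]
  congr 2
  · ring
  · exact trace_congr fun Y => nab2_omega X Y (M.K Y)

theorem isLinearMap_lambdaI : IsLinearMap C M.lambdaI := by
  have hnab := M.isHermitian_J.isBilinearMap_nabA
  constructor <;> intros <;>
    simp only [lambdaI_eq_trace, hnab.add_left, hnab.smul_left, M.g_add_right, M.g_smul_right,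
      trace_add, trace_const_mul, smul_eq_mul] <;>
    algebra

namespace IsConformal

variable (h : M.IsConformal N σ es)
include h

theorem omega_eq (X Y : V) : N.omega A X Y = es * es * M.omega A X Y := h.g_eq X (A Y)

theorem d2_omega (X Y Z : V) :
    N.d2 (N.omega A) X Y Z
      = es * es * ((2 : ℝ) • wedge12 (fun W => M.D W σ) (M.omega A) X Y Z
          + M.d2 (M.omega A) X Y Z) := by
  simp only [d2, wedge12, h.D_eq, h.bracket_eq, h.omega_eq, h.D_factor_sq_mul, Algebra.smul_def,
    map_ofNat]
  ring

theorem nabA_eq (hA : M.IsHermitian A) (X Y : V) :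
    N.nabA A X Y = M.nabA A X Y + M.D (A Y) σ • X - M.g X (A Y) • M.grad σ - M.D Y σ • A X
      + M.g X Y • A (M.grad σ) := by
  simp only [nabA, h.nab_eq, hA.map_add, hA.map_sub, hA.map_smul]
  abel

theorem g_nabA (hA : M.IsHermitian A) (X Y Z : V) :
    M.g Y (N.nabA A X Z) = M.g Y (M.nabA A X Z)
      + (M.D (A Z) σ * M.g Y X - M.D Y σ * M.g X (A Z) - M.D Z σ * M.g Y (A X)
        - M.D (A Y) σ * M.g X Z) := by
  simp only [h.nabA_eq hA, M.g_add_right, M.g_sub_right, M.g_smul_right, hA.g_map_comm Y (M.grad σ),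
    M.g_grad_left, M.g_grad_right]
  ring

theorem g_map_nabA (hA : M.IsHermitian A) (X Y Z : V) :
    M.g Y (A (N.nabA A X Z)) = M.g Y (A (M.nabA A X Z))
      + (M.g (A X) Y * M.D (A Z) σ - M.g (A X) Z * M.D (A Y) σ
        + (M.g X Y * M.D Z σ - M.g X Z * M.D Y σ)) := by
  rw [← neg_inj, ← hA.skew, h.g_nabA hA, hA.isometry, hA.sq, M.D_neg_left, neg_add, ← hA.skew,
    M.g_symm (A Y) X, M.g_symm Y X]
  linear_combination M.D (A Z) σ * hA.skew X Y - M.D (A Y) σ * hA.skew X Z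

theorem trace_endomorphism {F : V → V} (hF : IsLinearMap C F) :
    N.trace (fun X Y => N.g Y (F X)) = M.trace fun X Y => M.g Y (F X) :=
  h.trace_eq ⟨fun X Y Z => by rw [hF.map_add, M.g_add_right],
    fun c X Y => by rw [hF.map_smul, M.g_smul_right, smul_eq_mul],
    fun X Y Z => M.g_add Y Z _, fun c X Y => M.g_smul c Y _⟩ fun X Y => h.g_eq Y (F X)

theorem act1_codiff2_omega (hA : M.IsHermitian A) (X : V) :
    act1 A (N.codiff2 (N.omega A)) X
      = act1 A (M.codiff2 (M.omega A)) X - (2 * (2 * (n : ℝ) - 1)) • M.D X σ := by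
  have hD := M.isLinearMap_D σ
  have hnab := (h.isHermitian hA).isBilinearMap_nabA
  have trace_map : (M.trace fun X Y => M.g X (A Y)) = 0 :=
    Finset.sum_eq_zero fun i _ => hA.g_self_map _
  have trace_nabA (Z : V) : (N.trace fun X Y => N.g Y (N.nabA A X Z))
      = (M.trace fun X Y => M.g Y (M.nabA A X Z)) + (4 * (n : C) - 2) * M.D (A Z) σ := calc
    _ = M.trace fun X Y => M.g Y (N.nabA A X Z) :=
        h.trace_endomorphism ⟨fun X Y => hnab.add_left X Y Z, fun c X => hnab.smul_left c X Z⟩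
    _ = M.trace fun X Y => M.g Y (M.nabA A X Z) + (M.D (A Z) σ * M.g X Y
          - M.D X σ * M.g (A Z) Y - M.D Z σ * M.g X (A Y) - M.D (A X) σ * M.g Z Y) :=
        trace_congr fun X => by rw [h.g_nabA hA, M.g_symm X (A Z), M.g_symm X Z]
    _ = _ := by
        simp only [trace_add, trace_sub, trace_const_mul, trace_g, trace_map, trace_map_mul_g hD,
          trace_map_mul_g (hA.comp_isLinearMap hD)]
        ring
  simp only [act1, codiff2_omega, trace_nabA, hA.sq, M.D_neg_left]
  algebra

theorem lambdaI_eq (X : V) : N.lambdaI X = M.lambdaI X - (1 / (n : ℝ)) • M.D (M.I X) σ := by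
  have hD := M.isLinearMap_D σ
  have hJ := M.isHermitian_J
  have hK := M.isHermitian_K
  have hnab := (h.isHermitian hJ).isBilinearMap_nabA
  have trace_nabA (X : V) : (N.trace fun Y Z => N.g Z (N.nabA M.J X (M.K Y)))
      = (M.trace fun Y Z => M.g Z (M.nabA M.J X (M.K Y))) + (4 : ℝ) • M.D (M.I X) σ := calc
    _ = M.trace fun Y Z => M.g Z (N.nabA M.J X (M.K Y)) :=
        h.trace_endomorphism ⟨fun Y Z => by rw [hK.map_add, hnab.add_right],
          fun c Y => by rw [hK.map_smul, hnab.smul_right]⟩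
    _ = M.trace fun Y Z => M.g Z (M.nabA M.J X (M.K Y)) + (M.D (M.I Y) σ * M.g X Z
          - M.D Y σ * M.g X (M.I Z) - M.D (M.K Y) σ * M.g (M.J X) Z
          - M.D (M.J Y) σ * M.g X (M.K Z)) :=
        trace_congr fun Y => by rw [h.g_nabA hJ, M.J_K, M.g_symm Y X, M.g_symm Y (M.J X)]
    _ = _ := by
        simp only [trace_add, trace_sub, trace_map_mul_g (M.isHermitian_I.comp_isLinearMap hD),
          trace_map_mul_g (hK.comp_isLinearMap hD), M.isHermitian_I.trace_map_mul_g_map hD,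
          hK.trace_map_mul_g_map (hJ.comp_isLinearMap hD), M.J_K, M.K_J, M.D_neg_left]
        module
  rw [lambdaI_eq_trace, lambdaI_eq_trace, h.J_eq, h.K_eq, trace_nabA]
  match_scalars <;> ring

theorem act1_lambdaI (X : V) :
    act1 M.I N.lambdaI X = act1 M.I M.lambdaI X - (1 / (n : ℝ)) • M.D X σ := by
  rw [act1, act1, h.lambdaI_eq, M.I_sq, M.D_neg_left]
  module

theorem inner2_omega (hB : M.IsHermitian B) {φ ψ : V → V → C} (hψ : IsBilinearMap C ψ)
    (hφψ : ∀ X Y, φ X Y = es * es * ψ X Y) :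
    N.inner2 φ (N.omega B) = M.inner2 ψ (M.omega B) := by
  have hφ (X : V) : IsLinearMap C (φ X) :=
    ⟨fun Y Z => by rw [hφψ, hφψ, hφψ, hψ.add_right, mul_add],
      fun c Y => by rw [hφψ, hφψ, hψ.smul_right, smul_eq_mul, smul_eq_mul, mul_left_comm]⟩
  rw [(h.isHermitian hB).inner2_omega hφ,
    hB.inner2_omega fun X => ⟨hψ.add_right X, fun c Y => hψ.smul_right c X Y⟩,
    h.trace_eq (hB.isBilinearMap_comp_right hψ) fun X Y => hφψ X (B Y)]

theorem act3_d2_omega (hA : M.IsHermitian A) (X Y Z : V) :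
    act3 A (N.d2 (N.omega A)) X Y Z
      = es * es * (act3 A (M.d2 (M.omega A)) X Y Z
          + (2 : ℝ) • wedge12 (act1 A fun W => M.D W σ) (M.omega A) X Y Z) := by
  rw [← hA.act3_wedge12_omega, act3, h.d2_omega, act3, act3]
  algebra

theorem betaI_eq (X Y Z : V) :
    N.betaI X Y Z
      = es * es * (M.betaI X Y Z
          + (2 : ℝ) • wedge12 (act1 M.J (fun W => M.D W σ)) (M.omega M.J) X Y Z
          + (2 : ℝ) • wedge12 (act1 M.K (fun W => M.D W σ)) (M.omega M.K) X Y Z) := by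
  simp only [betaI, h.J_eq, h.K_eq, h.act3_d2_omega M.isHermitian_J,
    h.act3_d2_omega M.isHermitian_K]
  ring

theorem Lam_act3_d2_omega (hA : M.IsHermitian A) (hB : M.IsHermitian B) (X : V) :
    N.Lam B (act3 A (N.d2 (N.omega A))) X
      = M.Lam B (act3 A (M.d2 (M.omega A))) X
        + (2 : ℝ) • M.Lam B (wedge12 (act1 A fun W => M.D W σ) (M.omega A)) X := by
  have hAdσ := hA.isLinearMap_act1 (M.isLinearMap_D σ)
  have hd := hA.isBilinearMap_act3_d2_omega X
  have hw := hA.isBilinearMap_wedge12_omega hAdσ X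
  rw [← Lam_smul, ← Lam_add]
  refine h.inner2_omega hB ⟨?_, ?_, ?_, ?_⟩ (h.act3_d2_omega hA X) <;> intros
  · rw [hd.add_left, hw.add_left]
    module
  · rw [hd.smul_left, hw.smul_left, smul_comm, smul_add]
  · rw [hd.add_right, hw.add_right]
    module
  · rw [hd.smul_right, hw.smul_right, smul_comm, smul_add]

theorem Lam_act3_d2_omega_self (hA : M.IsHermitian A) (X : V) :
    N.Lam A (act3 A (N.d2 (N.omega A))) X
      = M.Lam A (act3 A (M.d2 (M.omega A))) X - (2 * (2 * (n : ℝ) - 1)) • M.D (A X) σ := by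
  rw [h.Lam_act3_d2_omega hA hA,
    hA.Lam_wedge12_omega_self (hA.isLinearMap_act1 (M.isLinearMap_D σ)), act1]
  module

theorem Lam_act3_d2_omega_of_anticomm (hA : M.IsHermitian A) (hB : M.IsHermitian B)
    (hAB : ∀ X, A (B X) = -B (A X)) (X : V) :
    N.Lam B (act3 A (N.d2 (N.omega A))) X
      = M.Lam B (act3 A (M.d2 (M.omega A))) X - (2 : ℝ) • M.D (B X) σ := by
  have hAdσ := hA.isLinearMap_act1 (M.isLinearMap_D σ)
  rw [h.Lam_act3_d2_omega hA hB, hA.Lam_wedge12_omega_of_anticomm hB hAB hAdσ, act1, hAB, hA.sq,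
    hB.map_neg, neg_neg, smul_neg, sub_eq_add_neg]

theorem nu4I_eq (X : V) : N.nu4I X = M.nu4I X - (4 : ℝ) • M.D X σ := by
  have Lam_betaI (X : V) :
      N.Lam M.I N.betaI X = M.Lam M.I M.betaI X - (4 : ℝ) • M.D (M.I X) σ := calc
    _ = N.Lam M.I (act3 M.J (N.d2 (N.omega M.J))) X
          + N.Lam M.I (act3 M.K (N.d2 (N.omega M.K))) X := by
        rw [← h.J_eq, ← h.K_eq]
        exact Lam_add _ _ X
    _ = M.Lam M.I (act3 M.J (M.d2 (M.omega M.J))) X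
          + M.Lam M.I (act3 M.K (M.d2 (M.omega M.K))) X - (4 : ℝ) • M.D (M.I X) σ := by
        rw [h.Lam_act3_d2_omega_of_anticomm M.isHermitian_J M.isHermitian_I fun X => by
            rw [M.J_I, M.I_J],
          h.Lam_act3_d2_omega_of_anticomm M.isHermitian_K M.isHermitian_I fun X => by
            rw [M.K_I, M.I_K, neg_neg]]
        module
    _ = _ := congrArg (· - _) (Lam_add _ _ X).symm
  rw [nu4I, nu4I, act1, act1, h.I_eq, Lam_betaI, M.I_sq, M.D_neg_left]
  module

theorem nu3I_eq (hn : n ≠ 1) (X : V) : N.nu3I X = M.nu3I X - (4 : ℝ) • M.D X σ := by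
  have Lam_betaI (X : V) :
      N.Lam M.J N.betaI X = M.Lam M.J M.betaI X - (4 * (n : ℝ)) • M.D (M.J X) σ := calc
    _ = N.Lam M.J (act3 M.J (N.d2 (N.omega M.J))) X
          + N.Lam M.J (act3 M.K (N.d2 (N.omega M.K))) X := by
        rw [← h.J_eq, ← h.K_eq]
        exact Lam_add _ _ X
    _ = M.Lam M.J (act3 M.J (M.d2 (M.omega M.J))) X
          + M.Lam M.J (act3 M.K (M.d2 (M.omega M.K))) X - (4 * (n : ℝ)) • M.D (M.J X) σ := by
        rw [h.Lam_act3_d2_omega_self M.isHermitian_J,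
          h.Lam_act3_d2_omega_of_anticomm M.isHermitian_K M.isHermitian_J fun X => by
            rw [M.K_J, M.J_K]]
        module
    _ = _ := congrArg (· - _) (Lam_add _ _ X).symm
  have act1_Lam : act1 M.J (N.Lam M.J N.betaI) X
      = act1 M.J (M.Lam M.J M.betaI) X - (4 * (n : ℝ)) • M.D X σ := by
    rw [act1, act1, Lam_betaI, M.J_sq, M.D_neg_left]
    module
  have hn1 : (n : ℝ) - 1 ≠ 0 := sub_ne_zero.mpr (Nat.cast_ne_one.mpr hn)
  rw [nu3I, nu3I, h.J_eq, act1_Lam, h.nu4I_eq]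
  match_scalars <;> field_simp
  ring

end IsConformal

end KahlerForm

section EHTensor

variable {n : ℕ} {C V : Type*} [CommRing C] [Algebra ℝ C] [AddCommGroup V] [Module C V]
  {M : AQH n C V} {θ : V → C}

theorem sum_g_frame_mul {F : V → V} (hF : IsLinearMap C F) (X Y Z : V) (a b : C) :
    ∑ i, M.g (M.frame i) X * (M.g (F (M.frame i)) Y * a - M.g (F (M.frame i)) Z * b)
      = M.g (F X) Y * a - M.g (F X) Z * b := by
  have form_linear : IsLinearMap C fun W => M.g (F W) Y * a - M.g (F W) Z * b := by
    constructor <;> intros <;>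
      simp only [hF.map_add, hF.map_smul, M.g_add, M.g_smul, smul_eq_mul] <;>
      ring
  rw [← M.sum_map_frame_mul_g form_linear X]
  exact Finset.sum_congr rfl fun i _ => by rw [M.g_symm _ X, mul_comm]

theorem xiEH3_eq (θ : V → C) (X Y Z : V) :
    M.xiEH3 θ X Y Z
      = (3 : ℝ) • (M.g X Y * θ Z - M.g X Z * θ Y)
        + (M.g (M.I X) Y * θ (M.I Z) - M.g (M.I X) Z * θ (M.I Y))
        + (M.g (M.J X) Y * θ (M.J Z) - M.g (M.J X) Z * θ (M.J Y))
        + (M.g (M.K X) Y * θ (M.K Z) - M.g (M.K X) Z * θ (M.K Y))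
        + (2 / (n : ℝ)) • (θ (M.I X) * M.g Y (M.I Z) + θ (M.J X) * M.g Y (M.J Z)
          + θ (M.K X) * M.g Y (M.K Z)) := by
  have sum_id := M.sum_g_frame_mul (F := id) LinearMap.id.isLinear X Y Z (θ Z) (θ Y)
  simp only [id_eq] at sum_id
  simp only [xiEH3, sum_id, sum_g_frame_mul M.isHermitian_I.toIsLinearMap,
    sum_g_frame_mul M.isHermitian_J.toIsLinearMap, sum_g_frame_mul M.isHermitian_K.toIsLinearMap,
    act1, omega]
  algebra

theorem trace_xiEH3 (hn : n ≠ 0) (hθ : IsLinearMap C θ) (Z : V) :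
    (M.trace fun X Y => M.xiEH3 θ X Z Y)
      = -((6 / (n : ℝ) * (2 * n + 1) * (n - 1)) • θ Z) := by
  have hI := M.isHermitian_I
  have hJ := M.isHermitian_J
  have hK := M.isHermitian_K
  have diagonal (X : V) : M.xiEH3 θ X Z X = (3 : ℝ) • (θ X * M.g Z X - θ Z * M.g X X)
      + (1 + 2 / (n : ℝ)) • (θ (M.I X) * M.g Z (M.I X) + θ (M.J X) * M.g Z (M.J X)
        + θ (M.K X) * M.g Z (M.K X)) := by
    rw [xiEH3_eq, M.g_symm (M.I X) X, M.g_symm (M.J X) X, M.g_symm (M.K X) X, hI.g_self_map,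
      hJ.g_self_map, hK.g_self_map, M.g_symm _ Z, M.g_symm _ Z, M.g_symm _ Z, M.g_symm _ Z]
    algebra
  calc
    _ = M.trace fun X Y => (3 : ℝ) • (θ X * M.g Z Y - θ Z * M.g X Y)
          + (1 + 2 / (n : ℝ)) • (θ (M.I X) * M.g Z (M.I Y) + θ (M.J X) * M.g Z (M.J Y)
            + θ (M.K X) * M.g Z (M.K Y)) := trace_congr diagonal
    _ = (3 : ℝ) • (θ Z - θ Z * (4 * (n : C))) + (1 + 2 / (n : ℝ)) • (θ Z + θ Z + θ Z) := by
        simp only [trace_add, trace_sub, trace_smul, trace_const_mul, trace_g, trace_map_mul_g hθ,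
          hI.trace_map_map_mul_g_map hθ, hJ.trace_map_map_mul_g_map hθ,
          hK.trace_map_map_mul_g_map hθ]
    _ = (3 * (1 - 4 * (n : ℝ)) + 3 * (1 + 2 / (n : ℝ))) • θ Z := by algebra
    _ = _ := by
        rw [← neg_smul]
        congr 1
        field_simp
        ring

theorem trace_xiEH3_I (hn : n ≠ 0) (hθ : IsLinearMap C θ) (Z : V) :
    (M.trace fun X Y => M.xiEH3 θ X (M.I Z) (M.I Y))
      = (2 / (n : ℝ) * (2 * n + 1) * (n - 1)) • θ Z := by
  have hI := M.isHermitian_I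
  have hJ := M.isHermitian_J
  have hK := M.isHermitian_K
  have diagonal (X : V) : M.xiEH3 θ X (M.I Z) (M.I X) = θ Z * M.g X X - θ X * M.g Z X
      + (2 / (n : ℝ) - 3) • (θ (M.I X) * M.g Z (M.I X))
      + (1 - 2 / (n : ℝ)) • (θ (M.J X) * M.g Z (M.J X) + θ (M.K X) * M.g Z (M.K X)) := by
    simp only [xiEH3_eq, hI.skew, hJ.skew, hK.skew, hI.sq, M.I_J, M.I_K, M.J_I, M.K_I,
      M.g_neg_right, hI.map_neg, hθ.map_neg, hI.g_self_map, hJ.g_self_map, hK.g_self_map,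
      hI.g_map_comm X Z, hJ.g_map_comm X Z, hK.g_map_comm X Z, M.g_symm X Z]
    algebra
  calc
    _ = M.trace fun X Y => θ Z * M.g X Y - θ X * M.g Z Y
          + (2 / (n : ℝ) - 3) • (θ (M.I X) * M.g Z (M.I Y))
          + (1 - 2 / (n : ℝ)) • (θ (M.J X) * M.g Z (M.J Y) + θ (M.K X) * M.g Z (M.K Y)) :=
        trace_congr diagonal
    _ = θ Z * (4 * (n : C)) - θ Z + (2 / (n : ℝ) - 3) • θ Z
          + (1 - 2 / (n : ℝ)) • (θ Z + θ Z) := by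
        simp only [trace_add, trace_sub, trace_smul, trace_const_mul, trace_g, trace_map_mul_g hθ,
          hI.trace_map_map_mul_g_map hθ, hJ.trace_map_map_mul_g_map hθ,
          hK.trace_map_map_mul_g_map hθ]
    _ = (4 * (n : ℝ) - 1 + (2 / (n : ℝ) - 3) + 2 * (1 - 2 / (n : ℝ))) • θ Z := by algebra
    _ = _ := by
        congr 1
        field_simp
        ring

end EHTensor

section IntrinsicTorsion

variable {n : ℕ} {C V : Type*} [CommRing C] [Algebra ℝ C] [AddCommGroup V] [Module C V]
  [Module ℝ V] {M N : AQH n C V} {σ es : C}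

theorem xi_rot : M.rot.xi = M.xi := by
  funext X Y
  change (-(1/4 : ℝ)) • (M.J (M.nabA M.J X Y) + M.K (M.nabA M.K X Y) + M.I (M.nabA M.I X Y))
    + (1/2 : ℝ) • (M.lambdaJ X • M.J Y + M.lambdaK X • M.K Y + M.lambdaI X • M.I Y) = _
  rw [xi]
  congr 2 <;> abel

theorem thetaXiI_rot : M.rot.thetaXiI = M.thetaXiJ := by
  funext X
  simp only [thetaXiI, thetaXiJ, xi_rot]
  rfl

theorem thetaXiJ_rot : M.rot.thetaXiJ = M.thetaXiK := by
  funext X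
  simp only [thetaXiJ, thetaXiK, xi_rot]
  rfl

theorem thetaXi_eq_trace (X : V) :
    M.thetaXi X = -(((n : ℝ) / (6 * (2 * n + 1) * (n - 1)))
      • M.trace fun Y Z => M.g X (M.xi Y Z)) := by
  simp only [thetaXi, trace, M.g_symm X, neg_smul]

theorem thetaXiI_eq_trace (X : V) :
    M.thetaXiI X = ((n : ℝ) / (2 * (2 * n + 1) * (n - 1)))
      • M.trace fun Y Z => M.g (M.I X) (M.xi Y (M.I Z)) := by
  simp only [thetaXiI, trace, M.isHermitian_I.skew, M.g_symm _ (M.I X), Finset.sum_neg_distrib,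
    smul_neg, neg_smul, neg_neg]

variable [IsScalarTower ℝ C V]

theorem g_real_smul_right (r : ℝ) (X Y : V) : M.g X (r • Y) = r • M.g X Y := by
  rw [← algebraMap_smul C r Y, M.g_smul_right, Algebra.smul_def]

theorem isBilinearMap_xi : IsBilinearMap C M.xi := by
  have hI := M.isHermitian_I
  have hJ := M.isHermitian_J
  have hK := M.isHermitian_K
  have hlI := M.isLinearMap_lambdaI
  have hlJ : IsLinearMap C M.lambdaJ := M.rot.isLinearMap_lambdaI
  have hlK : IsLinearMap C M.lambdaK := M.rot.rot.isLinearMap_lambdaI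
  constructor <;> intros <;>
    simp only [xi, hI.map_add, hJ.map_add, hK.map_add, hI.map_smul, hJ.map_smul, hK.map_smul,
      hI.isBilinearMap_nabA.add_left, hJ.isBilinearMap_nabA.add_left,
      hK.isBilinearMap_nabA.add_left, hI.isBilinearMap_nabA.add_right,
      hJ.isBilinearMap_nabA.add_right, hK.isBilinearMap_nabA.add_right,
      hI.isBilinearMap_nabA.smul_left, hJ.isBilinearMap_nabA.smul_left,
      hK.isBilinearMap_nabA.smul_left, hI.isBilinearMap_nabA.smul_right,
      hJ.isBilinearMap_nabA.smul_right, hK.isBilinearMap_nabA.smul_right, hlI.map_add, hlJ.map_add,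
      hlK.map_add, hlI.map_smul, hlJ.map_smul, hlK.map_smul, ← algebraMap_smul C (_ : ℝ)] <;>
    module

theorem isBilinearMap_g_xi (Z : V) : IsBilinearMap C fun X Y => M.g Z (N.xi X Y) where
  add_left X X' Y := by rw [isBilinearMap_xi.add_left, M.g_add_right]
  smul_left c X Y := by rw [isBilinearMap_xi.smul_left, M.g_smul_right, smul_eq_mul]
  add_right X Y Y' := by rw [isBilinearMap_xi.add_right, M.g_add_right]
  smul_right c X Y := by rw [isBilinearMap_xi.smul_right, M.g_smul_right, smul_eq_mul]

namespace IsConformal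

variable (h : M.IsConformal N σ es)
include h

theorem g_xi (X Y Z : V) :
    M.g Y (N.xi X Z)
      = M.g Y (M.xi X Z) - (1 / 4 : ℝ) • M.xiEH3 (fun W => M.D W σ) X Y Z := by
  have hlJ : N.lambdaJ X = M.lambdaJ X - (1 / (n : ℝ)) • M.D (M.J X) σ := h.rot.lambdaI_eq X
  have hlK : N.lambdaK X = M.lambdaK X - (1 / (n : ℝ)) • M.D (M.K X) σ := h.rot.rot.lambdaI_eq X
  simp only [xi, h.I_eq, h.J_eq, h.K_eq, M.g_add_right, g_real_smul_right, M.g_smul_right,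
    h.g_map_nabA M.isHermitian_I, h.g_map_nabA M.isHermitian_J, h.g_map_nabA M.isHermitian_K,
    h.lambdaI_eq, hlJ, hlK, xiEH3_eq]
  algebra

theorem thetaXi_eq (hn : 1 < n) (X : V) :
    N.thetaXi X = M.thetaXi X - (1 / 4 : ℝ) • M.D X σ := by
  have trace_xi : (N.trace fun Y Z => N.g X (N.xi Y Z)) = (M.trace fun Y Z => M.g X (M.xi Y Z))
      + (1 / 4 * (6 / (n : ℝ) * (2 * n + 1) * (n - 1))) • M.D X σ := by
    rw [h.trace_eq (M.isBilinearMap_g_xi X) fun Y Z => h.g_eq X (N.xi Y Z)]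
    simp only [h.g_xi, trace_sub, trace_smul,
      trace_xiEH3 (Nat.ne_zero_of_lt hn) (M.isLinearMap_D σ)]
    module
  have hn1 : (n : ℝ) - 1 ≠ 0 := sub_ne_zero.mpr (Nat.cast_ne_one.mpr hn.ne')
  rw [thetaXi_eq_trace, thetaXi_eq_trace, trace_xi]
  match_scalars <;> field_simp

theorem thetaXiI_eq (hn : 1 < n) (X : V) :
    N.thetaXiI X = M.thetaXiI X - (1 / 4 : ℝ) • M.D X σ := by
  have trace_xi : (N.trace fun Y Z => N.g (M.I X) (N.xi Y (M.I Z)))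
      = (M.trace fun Y Z => M.g (M.I X) (M.xi Y (M.I Z)))
        - (1 / 4 * (2 / (n : ℝ) * (2 * n + 1) * (n - 1))) • M.D X σ := by
    rw [h.trace_eq (M.isHermitian_I.isBilinearMap_comp_right (M.isBilinearMap_g_xi (M.I X)))
      fun Y Z => h.g_eq (M.I X) (N.xi Y (M.I Z))]
    simp only [h.g_xi, trace_sub, trace_smul,
      trace_xiEH3_I (Nat.ne_zero_of_lt hn) (M.isLinearMap_D σ)]
    module
  have hn1 : (n : ℝ) - 1 ≠ 0 := sub_ne_zero.mpr (Nat.cast_ne_one.mpr hn.ne')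
  rw [thetaXiI_eq_trace, thetaXiI_eq_trace, h.I_eq, trace_xi]
  match_scalars <;> field_simp

theorem thetaXiJ_eq (hn : 1 < n) (X : V) :
    N.thetaXiJ X = M.thetaXiJ X - (1 / 4 : ℝ) • M.D X σ := by
  rw [← thetaXiI_rot, ← thetaXiI_rot]
  exact h.rot.thetaXiI_eq hn X

theorem thetaXiK_eq (hn : 1 < n) (X : V) :
    N.thetaXiK X = M.thetaXiK X - (1 / 4 : ℝ) • M.D X σ := by
  rw [← thetaXiJ_rot, ← thetaXiJ_rot]
  exact h.rot.thetaXiJ_eq hn X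

theorem xiEH3_thetaXi (hn : 1 < n) (X Y Z : V) :
    N.xiEH3 N.thetaXi X Y Z
      = es * es * (M.xiEH3 M.thetaXi X Y Z
          - (1 / 4 : ℝ) • M.xiEH3 (fun W => M.D W σ) X Y Z) := by
  simp only [xiEH3_eq, h.thetaXi_eq hn, h.g_eq, h.I_eq, h.J_eq, h.K_eq]
  algebra

theorem g_xi_sub_xiEH3 (hn : 1 < n) (X Y Z : V) :
    N.g Y (N.xi X Z) - N.xiEH3 N.thetaXi X Y Z
      = es * es * (M.g Y (M.xi X Z) - M.xiEH3 M.thetaXi X Y Z) := by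
  rw [h.g_eq, h.g_xi, h.xiEH3_thetaXi hn]
  ring

end IsConformal

end IntrinsicTorsion

theorem statement8_general {n : ℕ} {C V : Type*} [CommRing C] [Algebra ℝ C] [AddCommGroup V]
    [Module C V] [Module ℝ V] [IsScalarTower ℝ C V] {M N : AQH n C V} {σ es : C}
    (hn : 1 < n) (h : M.IsConformal N σ es) :
    (∀ X Y, N.omega N.I X Y = es * es * M.omega M.I X Y) ∧
    (∀ X Y, N.omega N.J X Y = es * es * M.omega M.J X Y) ∧
    (∀ X Y, N.omega N.K X Y = es * es * M.omega M.K X Y) ∧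
    (∀ X Y Z, N.d2 (N.omega N.I) X Y Z
      = es * es * ((2:ℝ) • wedge12 (fun W => M.D W σ) (M.omega M.I) X Y Z
          + M.d2 (M.omega M.I) X Y Z)) ∧
    (∀ X Y Z, N.d2 (N.omega N.J) X Y Z
      = es * es * ((2:ℝ) • wedge12 (fun W => M.D W σ) (M.omega M.J) X Y Z
          + M.d2 (M.omega M.J) X Y Z)) ∧
    (∀ X Y Z, N.d2 (N.omega N.K) X Y Z
      = es * es * ((2:ℝ) • wedge12 (fun W => M.D W σ) (M.omega M.K) X Y Z
          + M.d2 (M.omega M.K) X Y Z)) ∧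
    (∀ X, act1 N.I (N.codiff2 (N.omega N.I)) X
      = act1 M.I (M.codiff2 (M.omega M.I)) X - (2*(2*(n:ℝ)-1)) • M.D X σ) ∧
    (∀ X, act1 N.J (N.codiff2 (N.omega N.J)) X
      = act1 M.J (M.codiff2 (M.omega M.J)) X - (2*(2*(n:ℝ)-1)) • M.D X σ) ∧
    (∀ X, act1 N.K (N.codiff2 (N.omega N.K)) X
      = act1 M.K (M.codiff2 (M.omega M.K)) X - (2*(2*(n:ℝ)-1)) • M.D X σ) ∧
    (∀ X, act1 N.I N.lambdaI X = act1 M.I M.lambdaI X - (1/(n:ℝ)) • M.D X σ) ∧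
    (∀ X, act1 N.J N.lambdaJ X = act1 M.J M.lambdaJ X - (1/(n:ℝ)) • M.D X σ) ∧
    (∀ X, act1 N.K N.lambdaK X = act1 M.K M.lambdaK X - (1/(n:ℝ)) • M.D X σ) ∧
    (∀ X Y Z, N.betaI X Y Z
      = es * es * (M.betaI X Y Z
          + (2:ℝ) • wedge12 (act1 M.J (fun W => M.D W σ)) (M.omega M.J) X Y Z
          + (2:ℝ) • wedge12 (act1 M.K (fun W => M.D W σ)) (M.omega M.K) X Y Z)) ∧
    (∀ X Y Z, N.betaJ X Y Z
      = es * es * (M.betaJ X Y Z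
          + (2:ℝ) • wedge12 (act1 M.K (fun W => M.D W σ)) (M.omega M.K) X Y Z
          + (2:ℝ) • wedge12 (act1 M.I (fun W => M.D W σ)) (M.omega M.I) X Y Z)) ∧
    (∀ X Y Z, N.betaK X Y Z
      = es * es * (M.betaK X Y Z
          + (2:ℝ) • wedge12 (act1 M.I (fun W => M.D W σ)) (M.omega M.I) X Y Z
          + (2:ℝ) • wedge12 (act1 M.J (fun W => M.D W σ)) (M.omega M.J) X Y Z)) ∧
    (∀ X, N.nu3I X = M.nu3I X - (4:ℝ) • M.D X σ) ∧
    (∀ X, N.nu3J X = M.nu3J X - (4:ℝ) • M.D X σ) ∧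
    (∀ X, N.nu3K X = M.nu3K X - (4:ℝ) • M.D X σ) ∧
    (∀ X, N.nu4I X = M.nu4I X - (4:ℝ) • M.D X σ) ∧
    (∀ X, N.nu4J X = M.nu4J X - (4:ℝ) • M.D X σ) ∧
    (∀ X, N.nu4K X = M.nu4K X - (4:ℝ) • M.D X σ) ∧
    (∀ X, N.thetaXi X = M.thetaXi X - (1/4:ℝ) • M.D X σ) ∧
    (∀ X, N.thetaXiI X = M.thetaXiI X - (1/4:ℝ) • M.D X σ) ∧
    (∀ X, N.thetaXiJ X = M.thetaXiJ X - (1/4:ℝ) • M.D X σ) ∧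
    (∀ X, N.thetaXiK X = M.thetaXiK X - (1/4:ℝ) • M.D X σ) ∧
    (∀ X Y Z, N.g Y (N.xi X Z) - N.xiEH3 N.thetaXi X Y Z
      = es * es * (M.g Y (M.xi X Z) - M.xiEH3 M.thetaXi X Y Z)) := by
  have hI := M.isHermitian_I
  have hJ := M.isHermitian_J
  have hK := M.isHermitian_K
  have hr := h.rot
  have hrr := h.rot.rot
  rw [h.I_eq, h.J_eq, h.K_eq]
  exact ⟨h.omega_eq, h.omega_eq, h.omega_eq, h.d2_omega, h.d2_omega, h.d2_omega,
    h.act1_codiff2_omega hI, h.act1_codiff2_omega hJ, h.act1_codiff2_omega hK,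
    h.act1_lambdaI, hr.act1_lambdaI, hrr.act1_lambdaI, h.betaI_eq, hr.betaI_eq, hrr.betaI_eq,
    h.nu3I_eq hn.ne', hr.nu3I_eq hn.ne', hrr.nu3I_eq hn.ne',
    h.nu4I_eq, hr.nu4I_eq, hrr.nu4I_eq, h.thetaXi_eq hn, h.thetaXiI_eq hn,
    h.thetaXiJ_eq hn, h.thetaXiK_eq hn, h.g_xi_sub_xiEH3 hn⟩

end AQH

open AQH in
/-- Conformal change of metric `g° = e^{2σ} g` on an almost
quaternion-Hermitian `4n`-manifold.  The conformal factor `e^σ` is modelled by an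
invertible function `es` with `D X es = es · D X σ`, and `N` is the almost
quaternion-Hermitian structure with the same `I, J, K`, derivative, bracket, metric
`g° = es² g` and rescaled orthonormal frame (its field `N.nab` is then the
Levi-Civita connection of `g°`, by the axioms of `AQH`).  The statement lists the
transformation rules of all associated tensors, and that the only component of
the intrinsic torsion that changes is `ξ_{EH}` (i.e. `ξ° - ξ°_{EH} = ξ - ξ_{EH}`
as `(1,2)`-tensors, written via the metrics as `(0,3)`-tensors). -/
theorem statement8 {n : ℕ} {C V : Type*} [CommRing C] [Algebra ℝ C] [AddCommGroup V]
    [Module C V] [Module ℝ V] [IsScalarTower ℝ C V]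
    (hn : 1 < n) (M N : AQH n C V)
    (σ es esInv : C)
    (hinv : es * esInv = 1)
    (hes : ∀ X, M.D X es = es * M.D X σ)
    (hD : N.D = M.D) (hbr : N.bracket = M.bracket)
    (hg : ∀ X Y, N.g X Y = es * es * M.g X Y)
    (hI : N.I = M.I) (hJ : N.J = M.J) (hK : N.K = M.K)
    (hframe : ∀ i, N.frame i = esInv • M.frame i) :
    -- `ω_A° = e^{2σ} ω_A`
    (∀ X Y, N.omega N.I X Y = es * es * M.omega M.I X Y) ∧
    (∀ X Y, N.omega N.J X Y = es * es * M.omega M.J X Y) ∧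
    (∀ X Y, N.omega N.K X Y = es * es * M.omega M.K X Y) ∧
    -- `dω_A° = e^{2σ} (2 dσ ∧ ω_A + dω_A)`
    (∀ X Y Z, N.d2 (N.omega N.I) X Y Z
      = es * es * ((2:ℝ) • wedge12 (fun W => M.D W σ) (M.omega M.I) X Y Z
          + M.d2 (M.omega M.I) X Y Z)) ∧
    (∀ X Y Z, N.d2 (N.omega N.J) X Y Z
      = es * es * ((2:ℝ) • wedge12 (fun W => M.D W σ) (M.omega M.J) X Y Z
          + M.d2 (M.omega M.J) X Y Z)) ∧
    (∀ X Y Z, N.d2 (N.omega N.K) X Y Z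
      = es * es * ((2:ℝ) • wedge12 (fun W => M.D W σ) (M.omega M.K) X Y Z
          + M.d2 (M.omega M.K) X Y Z)) ∧
    -- `A d*°ω_A° = A d*ω_A - 2(2n-1) dσ`
    (∀ X, act1 N.I (N.codiff2 (N.omega N.I)) X
      = act1 M.I (M.codiff2 (M.omega M.I)) X - (2*(2*(n:ℝ)-1)) • M.D X σ) ∧
    (∀ X, act1 N.J (N.codiff2 (N.omega N.J)) X
      = act1 M.J (M.codiff2 (M.omega M.J)) X - (2*(2*(n:ℝ)-1)) • M.D X σ) ∧
    (∀ X, act1 N.K (N.codiff2 (N.omega N.K)) X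
      = act1 M.K (M.codiff2 (M.omega M.K)) X - (2*(2*(n:ℝ)-1)) • M.D X σ) ∧
    -- `A λ_A° = A λ_A - (1/n) dσ`
    (∀ X, act1 N.I N.lambdaI X = act1 M.I M.lambdaI X - (1/(n:ℝ)) • M.D X σ) ∧
    (∀ X, act1 N.J N.lambdaJ X = act1 M.J M.lambdaJ X - (1/(n:ℝ)) • M.D X σ) ∧
    (∀ X, act1 N.K N.lambdaK X = act1 M.K M.lambdaK X - (1/(n:ℝ)) • M.D X σ) ∧
    -- `β_I° = e^{2σ} (β_I + 2 J dσ ∧ ω_J + 2 K dσ ∧ ω_K)`, and cyclically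
    (∀ X Y Z, N.betaI X Y Z
      = es * es * (M.betaI X Y Z
          + (2:ℝ) • wedge12 (act1 M.J (fun W => M.D W σ)) (M.omega M.J) X Y Z
          + (2:ℝ) • wedge12 (act1 M.K (fun W => M.D W σ)) (M.omega M.K) X Y Z)) ∧
    (∀ X Y Z, N.betaJ X Y Z
      = es * es * (M.betaJ X Y Z
          + (2:ℝ) • wedge12 (act1 M.K (fun W => M.D W σ)) (M.omega M.K) X Y Z
          + (2:ℝ) • wedge12 (act1 M.I (fun W => M.D W σ)) (M.omega M.I) X Y Z)) ∧
    (∀ X Y Z, N.betaK X Y Z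
      = es * es * (M.betaK X Y Z
          + (2:ℝ) • wedge12 (act1 M.I (fun W => M.D W σ)) (M.omega M.I) X Y Z
          + (2:ℝ) • wedge12 (act1 M.J (fun W => M.D W σ)) (M.omega M.J) X Y Z)) ∧
    -- `ν^A_3° = ν^A_3 - 4 dσ` and `ν^A_4° = ν^A_4 - 4 dσ`
    (∀ X, N.nu3I X = M.nu3I X - (4:ℝ) • M.D X σ) ∧
    (∀ X, N.nu3J X = M.nu3J X - (4:ℝ) • M.D X σ) ∧
    (∀ X, N.nu3K X = M.nu3K X - (4:ℝ) • M.D X σ) ∧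
    (∀ X, N.nu4I X = M.nu4I X - (4:ℝ) • M.D X σ) ∧
    (∀ X, N.nu4J X = M.nu4J X - (4:ℝ) • M.D X σ) ∧
    (∀ X, N.nu4K X = M.nu4K X - (4:ℝ) • M.D X σ) ∧
    -- `θ^{ξ°} = θ^ξ - (1/4) dσ` and `θ^{ξ°}_A = θ^ξ_A - (1/4) dσ`
    (∀ X, N.thetaXi X = M.thetaXi X - (1/4:ℝ) • M.D X σ) ∧
    (∀ X, N.thetaXiI X = M.thetaXiI X - (1/4:ℝ) • M.D X σ) ∧
    (∀ X, N.thetaXiJ X = M.thetaXiJ X - (1/4:ℝ) • M.D X σ) ∧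
    (∀ X, N.thetaXiK X = M.thetaXiK X - (1/4:ℝ) • M.D X σ) ∧
    -- only the `EH`-component of the intrinsic torsion changes:
    -- `ξ° - ξ°_{EH} = ξ - ξ_{EH}` (as `(0,3)`-tensors w.r.t. the two metrics)
    (∀ X Y Z, N.g Y (N.xi X Z) - N.xiEH3 N.thetaXi X Y Z
      = es * es * (M.g Y (M.xi X Z) - M.xiEH3 M.thetaXi X Y Z)) :=
  statement8_general hn ⟨hD, hbr, hg, hI, hJ, hes⟩
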